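/- arXiv:1411.6298 — 7 statements merged into one kernel-verified Lean document; each statement's English description precedes it below -/
import Mathlib

section
/- Let d ≥ 1, t ≥ 0, n ∈ ℤ/dℤ, φ ∈ ℝ, and let v ∈ ℂ⁴ be a unit coin vector, with initial state ψ₀ = |0⟩⊗v. Set φ' = −(2+φ) and let Q be the 4×4 diagonal matrix diag(1,1,1,−1) acting on the coin registers (ordered coin basis |↓↓⟩,|↓↑⟩,|↑↓⟩,|↑↑⟩). Then p(n,t,φ; |0⟩⊗v) = p(n,t,φ'; |0⟩⊗Qv). -/
open scoped Classical
open Complex Matrix Finset Filter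

noncomputable section

/-- The 2×2 coin matrix `C(θ)`. -/
def Cmat (θ : ℝ) : Matrix (Fin 2) (Fin 2) ℂ :=
  !![(Real.cos θ : ℂ), (Real.sin θ : ℂ); (Real.sin θ : ℂ), -(Real.cos θ : ℂ)]

/-- Encode a pair of coin states into `Fin 4` (ordered basis `|↓↓⟩,|↓↑⟩,|↑↓⟩,|↑↑⟩`). -/
def enc (c₁ c₂ : Fin 2) : Fin 4 := ⟨2 * c₁.val + c₂.val, by omega⟩

/-- First coin register of a combined index. -/
def dec₁ (i : Fin 4) : Fin 2 := ⟨i.val / 2, by omega⟩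

/-- Second (active) coin register of a combined index. -/
def dec₂ (i : Fin 4) : Fin 2 := ⟨i.val % 2, by omega⟩

/-- Coin flip operator `Ĉ(φ) = |↓⟩⟨↓|⊗C(π/4) + |↑⟩⟨↑|⊗C((π/4)(1+φ))` as a 4×4 matrix. -/
def Chat (φ : ℝ) : Matrix (Fin 4) (Fin 4) ℂ :=
  Matrix.of fun i j =>
    if dec₁ i = dec₁ j then
      (if dec₁ i = 0 then Cmat (Real.pi / 4) else Cmat (Real.pi / 4 * (1 + φ)))
        (dec₂ i) (dec₂ j)
    else 0

/-- A state of a walk on the `d`-cycle with two coin/memory registers: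
position `ZMod d`, combined coin index `Fin 4`. -/
abbrev WState (d : ℕ) := ZMod d → Fin 4 → ℂ

/-- Application of the coin flip operator `I_P ⊗ Ĉ(φ)`. -/
def coinOp (d : ℕ) (φ : ℝ) (ψ : WState d) : WState d :=
  fun n => (Chat φ).mulVec (ψ n)

/-- The shift operator: `|n,c₁,↓⟩ ↦ |n-1,c₁,↓⟩`, `|n,c₁,↑⟩ ↦ |n+1,c₁,↑⟩`. -/
def shiftOp (d : ℕ) (ψ : WState d) : WState d :=
  fun n i => if dec₂ i = 0 then ψ (n + 1) i else ψ (n - 1) i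

/-- The memory update operator `I_P ⊗ M` swapping the two coin registers. -/
def memOp (d : ℕ) (ψ : WState d) : WState d :=
  fun n i => ψ n (enc (dec₂ i) (dec₁ i))

/-- One step `U(φ) = (I_P⊗M)·S·(I_P⊗Ĉ(φ))` of the recycled-coin walk. -/
def Urc (d : ℕ) (φ : ℝ) (ψ : WState d) : WState d :=
  memOp d (shiftOp d (coinOp d φ ψ))

/-- The localized initial state `|0⟩ ⊗ v`. -/
def initState (d : ℕ) (v : Fin 4 → ℂ) : WState d :=
  fun n i => if n = 0 then v i else 0

/-- Position probability `p(n,t,φ;ψ₀)` of the recycled-coin walk. -/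
def prob (d : ℕ) (φ : ℝ) (ψ₀ : WState d) (n : ZMod d) (t : ℕ) : ℝ :=
  ∑ i : Fin 4, ‖((Urc d φ)^[t] ψ₀) n i‖ ^ 2

/-- `Q = diag(1,1,1,-1)`. -/
def Qmat : Matrix (Fin 4) (Fin 4) ℂ := Matrix.diagonal ![1, 1, 1, -1]

/-- Fourier-space one-step matrix `M_k(θ)` of the recycled-coin walk. -/
def Mk (d : ℕ) (k : ZMod d) (θ : ℝ) : Matrix (Fin 4) (Fin 4) ℂ :=
  let ω : ℂ := Complex.exp (2 * Real.pi * Complex.I * k.val / d)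
  let ωb : ℂ := Complex.exp (-(2 * Real.pi * Complex.I * k.val / d))
  !![ω / Real.sqrt 2, ω / Real.sqrt 2, 0, 0;
     0, 0, ω * Real.cos θ, ω * Real.sin θ;
     ωb / Real.sqrt 2, -(ωb / Real.sqrt 2), 0, 0;
     0, 0, ωb * Real.sin θ, -(ωb * Real.cos θ)]

/-- Fourier-space one-step matrix `N_k` of the memory walk with Hadamard coin. -/
def Nk (d : ℕ) (k : ZMod d) : Matrix (Fin 4) (Fin 4) ℂ :=
  let ω : ℂ := Complex.exp (2 * Real.pi * Complex.I * k.val / d)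
  let ωb : ℂ := Complex.exp (-(2 * Real.pi * Complex.I * k.val / d))
  ((Real.sqrt 2 : ℂ))⁻¹ • !![ω, 0, ω, 0; 0, ωb, 0, ωb; 0, ω, 0, -ω; ωb, 0, -ωb, 0]

/-- The permutation matrix `P` sending `(α,β,γ,δ)ᵀ` to `(α,γ,δ,β)ᵀ`. -/
def Pmat : Matrix (Fin 4) (Fin 4) ℂ :=
  !![1, 0, 0, 0; 0, 0, 1, 0; 0, 0, 0, 1; 0, 1, 0, 0]

/-- Hermitian inner product on `ℂ⁴`, conjugate linear in the first slot. -/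
def cdot (u v : Fin 4 → ℂ) : ℂ := ∑ i : Fin 4, (starRingEnd ℂ) (u i) * v i

/-- Coin flip operator `I_M ⊗ C(π/4)` of the memory walk. -/
def coinMem (d : ℕ) (ψ : WState d) : WState d :=
  fun n => (Matrix.of fun i j =>
    if dec₁ i = dec₁ j then Cmat (Real.pi / 4) (dec₂ i) (dec₂ j) else 0 :
    Matrix (Fin 4) (Fin 4) ℂ).mulVec (ψ n)

/-- The shift operator `S_𝓜` of the memory walk (registers: memory, coin). -/
def shiftMem (d : ℕ) (ψ : WState d) : WState d :=
  fun n i =>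
    if i = (0 : Fin 4) then ψ (n + 1) 0
    else if i = (1 : Fin 4) then ψ (n + 1) 3
    else if i = (2 : Fin 4) then ψ (n - 1) 2
    else ψ (n - 1) 1

/-- One step `U_𝓜 = S_𝓜 · (I_P⊗I_M⊗C(π/4))` of the quantum walk with memory. -/
def Umem (d : ℕ) (ψ : WState d) : WState d :=
  shiftMem d (coinMem d ψ)

/-- Position probability `p_𝓜(n,t;ψ₀)` of the quantum walk with memory. -/
def probMem (d : ℕ) (ψ₀ : WState d) (n : ZMod d) (t : ℕ) : ℝ :=
  ∑ i : Fin 4, ‖((Umem d)^[t] ψ₀) n i‖ ^ 2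

/-- Matrices `M₊(θ)` (statement 9). -/
def Mplus (θ : ℝ) : Matrix (Fin 4) (Fin 4) ℂ :=
  !![1 / Real.sqrt 2, 1 / Real.sqrt 2, 0, 0;
     0, 0, Real.cos θ, Real.sin θ;
     0, 0, 0, 0;
     0, 0, 0, 0]

/-- Matrices `M₋(θ)` (statement 9). -/
def Mminus (θ : ℝ) : Matrix (Fin 4) (Fin 4) ℂ :=
  !![0, 0, 0, 0;
     0, 0, 0, 0;
     1 / Real.sqrt 2, -(1 / Real.sqrt 2 : ℂ), 0, 0;
     0, 0, Real.sin θ, -(Real.cos θ : ℂ)]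

/-- Fourier transform of an amplitude function. -/
def FT (d : ℕ) [NeZero d] (ψ : WState d) (k : ZMod d) : Fin 4 → ℂ :=
  ∑ n : ZMod d, Complex.exp (-(2 * Real.pi * Complex.I * k.val * n.val / d)) • ψ n


/-- `Q` applied pointwise. -/
def Qop (d : ℕ) (ψ : WState d) : WState d := fun n => Qmat.mulVec (ψ n)

theorem Urc_Qop (d : ℕ) (φ : ℝ) (ψ : WState d) :
    Urc d (-(2 + φ)) (Qop d ψ) = Qop d (Urc d φ ψ) := by
  have h : Real.pi / 4 * (1 + -(2 + φ)) = -(Real.pi / 4 * (1 + φ)) := by ring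
  funext n i
  fin_cases i <;>
    simp [Urc, Qop, memOp, shiftOp, coinOp, Chat, Qmat, enc, dec₁, dec₂, Matrix.mulVec,
      dotProduct, Fin.sum_univ_four, Matrix.diagonal, Cmat, h, -neg_add_rev] <;> ring

theorem iter_Qop (d : ℕ) (φ : ℝ) (t : ℕ) (ψ : WState d) :
    (Urc d (-(2 + φ)))^[t] (Qop d ψ) = Qop d ((Urc d φ)^[t] ψ) := by
  induction t generalizing ψ with
  | zero => rfl
  | succ k ih => rw [Function.iterate_succ_apply, Function.iterate_succ_apply, Urc_Qop, ih]

theorem init_Qop (d : ℕ) (v : Fin 4 → ℂ) :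
    initState d (Qmat.mulVec v) = Qop d (initState d v) := by
  funext n i
  by_cases hn : n = 0 <;> simp [initState, Qop, hn, Matrix.mulVec, dotProduct]

/-- `p(n,t,φ; |0⟩⊗v) = p(n,t,-(2+φ); |0⟩⊗Qv)` (Theorem 1 of the paper). -/
theorem statement0 (d : ℕ) (hd : 1 ≤ d) (t : ℕ) (n : ZMod d) (φ : ℝ)
    (v : Fin 4 → ℂ) (hv : ∑ i : Fin 4, ‖v i‖ ^ 2 = 1) :
    prob d φ (initState d v) n t
      = prob d (-(2 + φ)) (initState d (Qmat.mulVec v)) n t := by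
  rw [init_Qop]
  unfold prob
  rw [iter_Qop]
  simp [Qop, Qmat, Matrix.mulVec_diagonal, Fin.sum_univ_four]

end
end

section
/- Let d ≥ 1, n ∈ ℤ/dℤ, φ ∈ ℝ, and let v ∈ ℂ⁴ be a unit coin vector. Set φ' = −(2+φ) and let Q = diag(1,1,1,−1) on the coin registers. Then for every integer T ≥ 1, the Cesàro averages agree: (1/T)·Σ_{t=1}^{T} p(n,t,φ; |0⟩⊗v) = (1/T)·Σ_{t=1}^{T} p(n,t,φ'; |0⟩⊗Qv). In particular, whenever the time-averaged (limiting) distributions p̄(n,φ;ψ₀) = lim_{T→∞}(1/T)Σ_{t=1}^{T} p(n,t,φ;ψ₀) exist, they coincide: p̄(n,φ; |0⟩⊗v) = p̄(n,φ'; |0⟩⊗Qv). -/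
open scoped Classical
open Complex Matrix Finset Filter

noncomputable section

theorem Qop_apply (d : ℕ) (ψ : WState d) (n : ZMod d) (i : Fin 4) :
    Qop d ψ n i = (![1, 1, 1, -1] : Fin 4 → ℂ) i * ψ n i := by
  simp [Qop, Qmat, Matrix.mulVec_diagonal]

theorem coinOp_Qop (d : ℕ) (φ : ℝ) (ψ : WState d) :
    coinOp d (-(2 + φ)) (Qop d ψ) = Qop d (coinOp d φ ψ) := by
  have h : Real.pi / 4 * (1 + -(2 + φ)) = -(Real.pi / 4 * (1 + φ)) := by ring
  funext n i
  rw [Qop_apply]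
  simp only [coinOp, Matrix.mulVec, dotProduct, Qop_apply, Fin.sum_univ_four, Chat, h]
  fin_cases i <;> simp [dec₁, dec₂, Cmat, Matrix.of_apply] <;> ring

theorem prob_Q (d : ℕ) (φ : ℝ) (v : Fin 4 → ℂ) (n : ZMod d) (t : ℕ) :
    prob d (-(2 + φ)) (initState d (Qmat.mulVec v)) n t = prob d φ (initState d v) n t := by
  have h0 : initState d (Qmat.mulVec v) = Qop d (initState d v) := by
    funext m i
    rw [Qop_apply]
    simp [initState, Qmat, Matrix.mulVec_diagonal]
  have h1 : ∀ ψ : WState d,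
      (Urc d (-(2 + φ)))^[t] (Qop d ψ) = Qop d ((Urc d φ)^[t] ψ) := fun ψ =>
    (Function.Semiconj.iterate_right (f := Qop d) (fun x => (Urc_Qop d φ x).symm) t ψ).symm
  unfold prob
  rw [h0, h1]
  refine Finset.sum_congr rfl fun i _ => ?_
  rw [Qop_apply]
  fin_cases i <;> simp

/-- the Cesàro averages for parameters `φ` (state `v`) and `φ' = -(2+φ)`
(state `Qv`) agree for all `T ≥ 1`; in particular the limiting distributions coincide
whenever they exist. -/
theorem statement1 (d : ℕ) (hd : 1 ≤ d) (n : ZMod d) (φ : ℝ)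
    (v : Fin 4 → ℂ) (hv : ∑ i : Fin 4, ‖v i‖ ^ 2 = 1) :
    (∀ T : ℕ, 1 ≤ T →
      (1 / (T : ℝ)) * ∑ t ∈ Finset.Icc 1 T, prob d φ (initState d v) n t
        = (1 / (T : ℝ)) * ∑ t ∈ Finset.Icc 1 T,
            prob d (-(2 + φ)) (initState d (Qmat.mulVec v)) n t) ∧
    (∀ L : ℝ,
      Tendsto (fun T : ℕ =>
          (1 / (T : ℝ)) * ∑ t ∈ Finset.Icc 1 T, prob d φ (initState d v) n t)
        atTop (nhds L) →
      Tendsto (fun T : ℕ =>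
          (1 / (T : ℝ)) * ∑ t ∈ Finset.Icc 1 T,
            prob d (-(2 + φ)) (initState d (Qmat.mulVec v)) n t)
        atTop (nhds L)) := by
  simp only [prob_Q]
  exact ⟨fun _ _ => trivial, fun _ h => h⟩

end
end

section
/- Let d ≥ 1, k ∈ ℤ/dℤ, and let P be the 4×4 permutation matrix sending (α,β,γ,δ)ᵀ to (α,γ,δ,β)ᵀ. If λ ∈ ℂ is an eigenvalue of N_k with eigenvector v ∈ ℂ⁴ (i.e., N_k v = λv, v ≠ 0), then M_k(3π/4)(Pv) = λ(Pv); that is, λ is also an eigenvalue of M_k(3π/4) with eigenvector Pv. -/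
open scoped Classical
open Complex Matrix Finset Filter

noncomputable section

/-- if `λ` is an eigenvalue of `N_k` with eigenvector `v`, then `λ` is
an eigenvalue of `M_k(3π/4)` with eigenvector `Pv`. -/
theorem statement7 (d : ℕ) (hd : 1 ≤ d) (k : ZMod d) (lam : ℂ)
    (v : Fin 4 → ℂ) (hv : v ≠ 0) (h : (Nk d k).mulVec v = lam • v) :
    (Mk d k (3 * Real.pi / 4)).mulVec (Pmat.mulVec v) = lam • Pmat.mulVec v := by
  have hs : (Real.sqrt 2 : ℝ) / 2 = (Real.sqrt 2)⁻¹ := by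
    have h2 : Real.sqrt 2 * Real.sqrt 2 = 2 := Real.mul_self_sqrt (by norm_num)
    have h0 : Real.sqrt 2 ≠ 0 := by positivity
    field_simp
    nlinarith
  have e : 3 * Real.pi / 4 = Real.pi - Real.pi / 4 := by ring
  have hc : ((Real.cos (3 * Real.pi / 4) : ℝ) : ℂ) = -((Real.sqrt 2 : ℝ) : ℂ)⁻¹ := by
    rw [e, Real.cos_pi_sub, Real.cos_pi_div_four, hs]; push_cast; rfl
  have hn : ((Real.sin (3 * Real.pi / 4) : ℝ) : ℂ) = ((Real.sqrt 2 : ℝ) : ℂ)⁻¹ := by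
    rw [e, Real.sin_pi_sub, Real.sin_pi_div_four, hs]; push_cast; rfl
  have h0 := congrFun h 0
  have h1 := congrFun h 1
  have h2 := congrFun h 2
  have h3 := congrFun h 3
  unfold Mk Pmat
  unfold Nk at h0 h1 h2 h3
  rw [hc, hn]
  generalize Complex.exp (2 * Real.pi * Complex.I * k.val / d) = w at *
  generalize Complex.exp (-(2 * Real.pi * Complex.I * k.val / d)) = wb at *
  generalize ((Real.sqrt 2 : ℝ) : ℂ) = r at *
  simp [Matrix.mulVec, dotProduct, Fin.sum_univ_four] at h0 h1 h2 h3
  ext i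
  fin_cases i <;> simp [Matrix.mulVec, dotProduct, Fin.sum_univ_four]
  · rw [← h0]; ring
  · rw [← h2]; ring
  · rw [← h3]; ring
  · rw [← h1]; ring

end
end

section
/- Let d ≥ 1, k ∈ ℤ/dℤ, and let P be the 4×4 permutation matrix sending (α,β,γ,δ)ᵀ to (α,γ,δ,β)ᵀ. Then the intertwining identity M_k(3π/4) · P = P · N_k holds; equivalently, M_k(3π/4) = P · N_k · P*. -/
open scoped Classical
open Complex Matrix Finset Filter

noncomputable section

theorem cos_aux : Real.cos (3 * Real.pi / 4) = -(Real.sqrt 2)⁻¹ := by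
  have h : 3 * Real.pi / 4 = Real.pi - Real.pi / 4 := by ring
  rw [h, Real.cos_pi_sub, Real.cos_pi_div_four, Real.sqrt_div_self', one_div]

theorem sin_aux : Real.sin (3 * Real.pi / 4) = (Real.sqrt 2)⁻¹ := by
  have h : 3 * Real.pi / 4 = Real.pi - Real.pi / 4 := by ring
  rw [h, Real.sin_pi_sub, Real.sin_pi_div_four, Real.sqrt_div_self', one_div]

theorem P_aux : Pmat * Pmatᴴ = 1 := by
  ext i j
  fin_cases i <;> fin_cases j <;>
    simp [Pmat, Matrix.mul_apply, Fin.sum_univ_four, Matrix.conjTranspose_apply]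

theorem inter_aux (d : ℕ) (k : ZMod d) :
    Mk d k (3 * Real.pi / 4) * Pmat = Pmat * Nk d k := by
  unfold Mk Nk Pmat
  rw [cos_aux, sin_aux]
  ext i j
  fin_cases i <;> fin_cases j <;>
    simp [Matrix.mul_apply, Fin.sum_univ_four, div_eq_mul_inv, mul_comm]

/-- the intertwining identity `M_k(3π/4)·P = P·N_k`, equivalently
`M_k(3π/4) = P·N_k·P*`. -/
theorem statement8 (d : ℕ) (hd : 1 ≤ d) (k : ZMod d) :
    Mk d k (3 * Real.pi / 4) * Pmat = Pmat * Nk d k ∧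
    Mk d k (3 * Real.pi / 4) = Pmat * Nk d k * Pmatᴴ := by
  refine ⟨inter_aux d k, ?_⟩
  rw [← inter_aux, Matrix.mul_assoc, P_aux, Matrix.mul_one]

end
end

section
/- Let d ≥ 1, φ ∈ ℝ, θ = (π/4)(1+φ), and let ψ : ℤ/dℤ → ℂ⁴ be any amplitude function, representing the state Ψ = Σ_{n} |n⟩⊗ψ(n) of the recycled-coin walk. Then U(φ)Ψ = Σ_{n} |n⟩⊗ψ'(n) where ψ'(n) = M₊(θ)·ψ(n+1) + M₋(θ)·ψ(n−1) (indices mod d), with M₊(θ) the 4×4 matrix whose rows are (1/√2, 1/√2, 0, 0), (0, 0, cos θ, sin θ), (0,0,0,0), (0,0,0,0), and M₋(θ) the 4×4 matrix whose rows are (0,0,0,0), (0,0,0,0), (1/√2, −1/√2, 0, 0), (0, 0, sin θ, −cos θ). -/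
open scoped Classical
open Complex Matrix Finset Filter

noncomputable section

/-- one step of the recycled-coin walk in amplitude form:
`ψ'(n) = M₊(θ)·ψ(n+1) + M₋(θ)·ψ(n-1)` with `θ = (π/4)(1+φ)`. -/
theorem statement9 (d : ℕ) (hd : 1 ≤ d) (φ θ : ℝ)
    (hθ : θ = Real.pi / 4 * (1 + φ)) (ψ : WState d) :
    Urc d φ ψ
      = fun n => (Mplus θ).mulVec (ψ (n + 1)) + (Mminus θ).mulVec (ψ (n - 1)) := by
  subst hθ
  have h1 : ((Real.cos (Real.pi / 4) : ℝ) : ℂ) = 1 / (Real.sqrt 2 : ℂ) := by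
    rw [← Complex.ofReal_one, ← Complex.ofReal_div, Real.cos_pi_div_four, Real.sqrt_div_self']
  have h2 : ((Real.sin (Real.pi / 4) : ℝ) : ℂ) = 1 / (Real.sqrt 2 : ℂ) := by
    rw [Real.sin_pi_div_four, ← Real.cos_pi_div_four, h1]
  have a0 : dec₁ 0 = 0 := rfl
  have a1 : dec₁ 1 = 0 := rfl
  have a2 : dec₁ 2 = 1 := rfl
  have a3 : dec₁ 3 = 1 := rfl
  have b0 : dec₂ 0 = 0 := rfl
  have b1 : dec₂ 1 = 1 := rfl
  have b2 : dec₂ 2 = 0 := rfl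
  have b3 : dec₂ 3 = 1 := rfl
  have e0 : enc 0 0 = 0 := rfl
  have e1 : enc 0 1 = 1 := rfl
  have e2 : enc 1 0 = 2 := rfl
  have e3 : enc 1 1 = 3 := rfl
  funext n i
  fin_cases i <;>
    simp [-Complex.ofReal_cos, -Complex.ofReal_sin, -Real.cos_pi_div_four,
      -Real.sin_pi_div_four, Urc, memOp, shiftOp, coinOp, Chat, Cmat, Mplus, Mminus,
      Matrix.mulVec, dotProduct, Fin.sum_univ_four, a0, a1, a2, a3, b0, b1, b2, b3,
      e0, e1, e2, e3, h1, h2]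
end
end

section
/- Let d ≥ 1, φ ∈ ℝ, θ = (π/4)(1+φ), and let v ∈ ℂ⁴ be a unit vector with initial state ψ₀ = |0⟩⊗v. For each k ∈ ℤ/dℤ, let {φ_j(k)}_{j=1}^{4} be an orthonormal basis of eigenvectors of M_k(θ) with corresponding eigenvalues λ_j(k), and set α_j(k) = ⟨φ_j(k), v⟩. Then for all n ∈ ℤ/dℤ and t ≥ 0: p(n,t,φ;ψ₀) = (1/d²)·Σ_{k,m=0}^{d−1} Σ_{j,l=1}^{4} e^{2πin(m−k)/d}·\overline{α_j(k)}·α_l(m)·(\overline{λ_j(k)}·λ_l(m))^t·⟨φ_j(k), φ_l(m)⟩. -/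
open scoped Classical
open Complex Matrix Finset Filter

noncomputable section

lemma aux_stdAddChar (d : ℕ) [NeZero d] (n k : ZMod d) :
    ZMod.stdAddChar (n * k) = Complex.exp (2 * Real.pi * Complex.I * n.val * k.val / d) := by
  have h : n * k = (((n.val * k.val : ℕ) : ℤ) : ZMod d) := by simp
  rw [h, ZMod.stdAddChar_coe]
  push_cast
  congr 1
  ring

lemma aux_omega (d : ℕ) [NeZero d] (k : ZMod d) :
    Complex.exp (2 * Real.pi * Complex.I * k.val / d) = ZMod.stdAddChar k := by
  have h : k = (((k.val : ℕ) : ℤ) : ZMod d) := by simp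
  conv_rhs => rw [h, ZMod.stdAddChar_coe]
  push_cast
  rfl

lemma aux_omegab (d : ℕ) [NeZero d] (k : ZMod d) :
    Complex.exp (-(2 * Real.pi * Complex.I * k.val / d)) = ZMod.stdAddChar (-k) := by
  rw [Complex.exp_neg, aux_omega, AddChar.map_neg_eq_inv]

lemma aux_step (d : ℕ) [NeZero d] (φ : ℝ) (c : ℂ) (w : ZMod d → Fin 4 → ℂ) :
    Urc d φ (fun n i => c * ∑ k : ZMod d, ZMod.stdAddChar (n * k) * w k i)
      = fun n i => c * ∑ k : ZMod d, ZMod.stdAddChar (n * k) *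
          ((Mk d k (Real.pi / 4 * (1 + φ))).mulVec (w k)) i := by
  have hp (n k : ZMod d) : (ZMod.stdAddChar ((n + 1) * k) : ℂ)
      = ZMod.stdAddChar (n * k) * ZMod.stdAddChar k := by
    rw [add_mul, one_mul, AddChar.map_add_eq_mul]
  have hm (n k : ZMod d) : (ZMod.stdAddChar ((n - 1) * k) : ℂ)
      = ZMod.stdAddChar (n * k) * ZMod.stdAddChar (-k) := by
    rw [sub_mul, one_mul, sub_eq_add_neg, AddChar.map_add_eq_mul]
  have hs : ((Real.sqrt 2 : ℝ) : ℂ) / 2 = 1 / (Real.sqrt 2 : ℝ) := by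
    rw [← Complex.ofReal_ofNat, ← Complex.ofReal_div, Real.sqrt_div_self']
    simp
  funext n i
  fin_cases i <;>
  simp [Urc, memOp, shiftOp, coinOp, Chat, Cmat, enc, dec₁, dec₂, Mk, Matrix.mulVec, dotProduct,
    Fin.sum_univ_four, aux_omega, aux_omegab, hp, hm, -ZMod.natCast_val, hs] <;>
  simp only [Finset.mul_sum, ← Finset.sum_add_distrib, ← Finset.sum_neg_distrib] <;>
  refine Finset.sum_congr rfl fun k _ => ?_ <;> ring

lemma aux_complete (P : Fin 4 → Fin 4 → ℂ)
    (h : ∀ j l, cdot (P j) (P l) = if j = l then 1 else 0) (v : Fin 4 → ℂ) (i : Fin 4) :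
    ∑ j, cdot (P j) v * P j i = v i := by
  have h1 : (Matrix.of fun j i => (starRingEnd ℂ) (P j i)) * (Matrix.of fun i l => P l i)
      = (1 : Matrix (Fin 4) (Fin 4) ℂ) := by
    ext j l
    rw [Matrix.mul_apply, Matrix.one_apply, ← h j l]
    rfl
  have h2 := mul_eq_one_comm.mp h1
  have h3 : ∀ i', ∑ j, P j i * (starRingEnd ℂ) (P j i') = if i = i' then 1 else 0 := by
    intro i'
    have := congrFun (congrFun h2 i) i'
    rw [Matrix.mul_apply, Matrix.one_apply] at this
    exact this
  calc ∑ j, cdot (P j) v * P j i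
      = ∑ i', (∑ j, P j i * (starRingEnd ℂ) (P j i')) * v i' := by
        simp only [cdot, Finset.sum_mul]
        rw [Finset.sum_comm]
        refine Finset.sum_congr rfl fun _ _ => Finset.sum_congr rfl fun _ _ => ?_
        ring
    _ = v i := by simp [h3]

lemma aux_evol (d : ℕ) [NeZero d] (φ : ℝ)
    (v : Fin 4 → ℂ)
    (Φ : ZMod d → Fin 4 → Fin 4 → ℂ) (lam : ZMod d → Fin 4 → ℂ)
    (horth : ∀ k j l, cdot (Φ k j) (Φ k l) = if j = l then 1 else 0)
    (heig : ∀ k j, (Mk d k (Real.pi / 4 * (1 + φ))).mulVec (Φ k j) = lam k j • Φ k j) (t : ℕ) :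
    (Urc d φ)^[t] (initState d v) = fun n i => (1 / (d : ℂ)) * ∑ k : ZMod d,
      ZMod.stdAddChar (n * k) * ∑ j, cdot (Φ k j) v * lam k j ^ t * Φ k j i := by
  induction t with
  | zero =>
    funext n i
    have hd : (d : ℂ) ≠ 0 := Nat.cast_ne_zero.mpr (NeZero.ne d)
    simp only [Function.iterate_zero, id, pow_zero, mul_one, aux_complete _ (horth _),
      ← Finset.sum_mul, initState]
    have := AddChar.sum_mulShift n (ZMod.isPrimitive_stdAddChar d)
    simp only [mul_comm _ n] at this
    rw [this]
    split_ifs <;> simp [hd]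
  | succ t ih =>
    rw [Function.iterate_succ_apply', ih, aux_step]
    funext n i
    congr 1
    refine Finset.sum_congr rfl fun k _ => ?_
    congr 1
    have e : (fun i => ∑ j, cdot (Φ k j) v * lam k j ^ t * Φ k j i)
        = ∑ j, (cdot (Φ k j) v * lam k j ^ t) • Φ k j := by
      funext i; simp
    rw [e, Matrix.mulVec_sum]
    simp only [Matrix.mulVec_smul, heig, Finset.sum_apply, Pi.smul_apply, smul_eq_mul]
    refine Finset.sum_congr rfl fun j _ => ?_
    ring

/-- closed form (Equation 17 of the paper) of `p(n,t,φ;|0⟩⊗v)` in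
terms of an orthonormal eigensystem `Φ k j`, `lam k j` of `M_k(θ)`. -/
theorem statement12 (d : ℕ) [NeZero d] (hd : 1 ≤ d) (φ θ : ℝ)
    (hθ : θ = Real.pi / 4 * (1 + φ))
    (v : Fin 4 → ℂ) (hv : ∑ i : Fin 4, ‖v i‖ ^ 2 = 1)
    (Φ : ZMod d → Fin 4 → Fin 4 → ℂ) (lam : ZMod d → Fin 4 → ℂ)
    (horth : ∀ k j l, cdot (Φ k j) (Φ k l) = if j = l then 1 else 0)
    (heig : ∀ k j, (Mk d k θ).mulVec (Φ k j) = lam k j • Φ k j)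
    (n : ZMod d) (t : ℕ) :
    (prob d φ (initState d v) n t : ℂ)
      = 1 / (d : ℂ) ^ 2 *
        ∑ k : ZMod d, ∑ m : ZMod d, ∑ j : Fin 4, ∑ l : Fin 4,
          Complex.exp (2 * Real.pi * Complex.I * n.val
              * ((m.val : ℂ) - (k.val : ℂ)) / d)
            * (starRingEnd ℂ) (cdot (Φ k j) v) * cdot (Φ m l) v
            * ((starRingEnd ℂ) (lam k j) * lam m l) ^ t
            * cdot (Φ k j) (Φ m l) := by
  subst hθ
  have hE : ∀ k m : ZMod d, Complex.exp (2 * Real.pi * Complex.I * n.val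
      * ((m.val : ℂ) - (k.val : ℂ)) / d)
      = (starRingEnd ℂ) (ZMod.stdAddChar (n * k)) * ZMod.stdAddChar (n * m) := by
    intro k m
    rw [aux_stdAddChar, aux_stdAddChar, ← Complex.exp_conj, ← Complex.exp_add]
    congr 1
    simp only [map_div₀, map_mul, map_natCast, map_ofNat, Complex.conj_ofReal, Complex.conj_I]
    ring
  simp only [hE, prob, aux_evol d φ v Φ lam horth heig t]
  push_cast
  simp only [← Complex.conj_mul', map_mul, map_sum, map_pow, map_div₀, map_one, map_natCast]
  have key : ∀ i : Fin 4, (1 / (d : ℂ) * ∑ k : ZMod d, (starRingEnd ℂ) (ZMod.stdAddChar (n * k)) *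
        ∑ j, (starRingEnd ℂ) (cdot (Φ k j) v) * (starRingEnd ℂ) (lam k j) ^ t *
          (starRingEnd ℂ) (Φ k j i)) *
      (1 / (d : ℂ) * ∑ m : ZMod d, ZMod.stdAddChar (n * m) *
        ∑ l, cdot (Φ m l) v * lam m l ^ t * Φ m l i)
      = 1 / (d : ℂ) ^ 2 * ∑ k : ZMod d, ∑ m : ZMod d, ∑ j : Fin 4, ∑ l : Fin 4,
        (starRingEnd ℂ) (ZMod.stdAddChar (n * k)) * ZMod.stdAddChar (n * m)
            * (starRingEnd ℂ) (cdot (Φ k j) v) * cdot (Φ m l) v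
            * ((starRingEnd ℂ) (lam k j) * lam m l) ^ t
            * ((starRingEnd ℂ) (Φ k j i) * Φ m l i) := by
    intro i
    rw [mul_mul_mul_comm, Finset.sum_mul_sum]
    congr 1
    · ring
    refine Finset.sum_congr rfl fun k _ => Finset.sum_congr rfl fun m _ => ?_
    rw [mul_mul_mul_comm, Finset.sum_mul_sum, Finset.mul_sum]
    refine Finset.sum_congr rfl fun j _ => ?_
    rw [Finset.mul_sum]
    refine Finset.sum_congr rfl fun l _ => ?_
    ring
  rw [Finset.sum_congr rfl fun i _ => key i, ← Finset.mul_sum]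
  congr 1
  rw [Finset.sum_comm]
  refine Finset.sum_congr rfl fun k _ => ?_
  rw [Finset.sum_comm]
  refine Finset.sum_congr rfl fun m _ => ?_
  rw [Finset.sum_comm]
  refine Finset.sum_congr rfl fun j _ => ?_
  rw [Finset.sum_comm]
  refine Finset.sum_congr rfl fun l _ => ?_
  rw [← Finset.mul_sum]
  rfl

end
end

section
/- Let d ≥ 1, φ ∈ ℝ, θ = (π/4)(1+φ), and let v ∈ ℂ⁴ be a unit vector with initial state ψ₀ = |0⟩⊗v. For each k ∈ ℤ/dℤ, let {φ_j(k)}_{j=1}^{4} be an orthonormal basis of eigenvectors of M_k(θ) with corresponding eigenvalues λ_j(k), and set α_j(k) = ⟨φ_j(k), v⟩. Then for every n ∈ ℤ/dℤ, the time-averaged distribution p̄(n,φ;ψ₀) = lim_{T→∞} (1/T)·Σ_{t=1}^{T} p(n,t,φ;ψ₀) exists and equals Σ f(n,k,m,j,l), where the sum ranges over all quadruples (k,m,j,l) with λ_j(k) = λ_l(m), and f(n,k,m,j,l) = (1/d²)·\overline{α_j(k)}·α_l(m)·⟨φ_j(k),φ_l(m)⟩·e^{2πin(m−k)/d}. -/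
open scoped Classical
open Complex Matrix Finset Filter

noncomputable section

lemma chi_eq (d : ℕ) [NeZero d] (k n : ZMod d) :
    ZMod.stdAddChar (k * n) = Complex.exp (2 * Real.pi * Complex.I * k.val * n.val / d) := by
  have h : k * n = (((k.val * n.val : ℕ) : ℤ) : ZMod d) := by
    push_cast; simp
  rw [h, ZMod.stdAddChar_coe]
  congr 1
  push_cast
  ring

lemma chi_one (d : ℕ) [NeZero d] (k : ZMod d) :
    ZMod.stdAddChar k = Complex.exp (2 * Real.pi * Complex.I * k.val / d) := by
  have h : k = (((k.val : ℕ) : ℤ) : ZMod d) := by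
    push_cast; simp
  conv_lhs => rw [h]
  rw [ZMod.stdAddChar_coe]
  congr 1

lemma chi_neg (d : ℕ) [NeZero d] (k : ZMod d) :
    ZMod.stdAddChar (-k) = Complex.exp (-(2 * Real.pi * Complex.I * k.val / d)) := by
  rw [AddChar.map_neg_eq_inv, chi_one, Complex.exp_neg]

lemma chi_conj (d : ℕ) [NeZero d] (k : ZMod d) :
    (starRingEnd ℂ) (ZMod.stdAddChar k) = ZMod.stdAddChar (-k) := by
  rw [chi_neg, chi_one, ← Complex.exp_conj]
  congr 1
  simp only [map_div₀, map_mul, Complex.conj_I, Complex.conj_ofReal, map_natCast, map_ofNat]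
  ring

lemma sqrt_aux : ((Real.sqrt 2 / 2 : ℝ) : ℂ) = 1 / (Real.sqrt 2 : ℂ) := by
  rw [Real.sqrt_div_self']
  push_cast; rfl

lemma Urc_fourier (d : ℕ) [NeZero d] (φ θ : ℝ) (hθ : θ = Real.pi / 4 * (1 + φ))
    (w : ZMod d → Fin 4 → ℂ) :
    Urc d φ (fun n i => ∑ k, ZMod.stdAddChar (k * n) * w k i) =
      fun n i => ∑ k, ZMod.stdAddChar (k * n) * ((Mk d k θ).mulVec (w k)) i := by
  subst hθ
  funext n i
  fin_cases i <;>
  · simp [Urc, memOp, shiftOp, coinOp, enc, dec₁, dec₂, Chat, Cmat, Matrix.mulVec, dotProduct,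
      Fin.sum_univ_four, Mk, Finset.mul_sum, ← Finset.sum_add_distrib, ← chi_one, ← chi_neg,
      mul_add, mul_sub, AddChar.map_add_eq_mul, sub_eq_add_neg, sqrt_aux, -ZMod.natCast_val, -Complex.ofReal_div, -Complex.ofReal_mul, -Complex.ofReal_add, -Complex.ofReal_cos, -Complex.ofReal_sin]
    try rw [← Finset.sum_neg_distrib, ← Finset.sum_add_distrib]
    try refine Finset.sum_congr rfl fun k _ => ?_
    try ring

lemma Mk_iso (d : ℕ) [NeZero d] (k : ZMod d) (θ : ℝ) (u : Fin 4 → ℂ) :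
    cdot ((Mk d k θ).mulVec u) ((Mk d k θ).mulVec u) = cdot u u := by
  have h1 : (ZMod.stdAddChar k : ℂ) * ZMod.stdAddChar (-k) = 1 := by
    rw [← AddChar.map_add_eq_mul]; simp
  have h2 : ((Real.sqrt 2 : ℂ)⁻¹) ^ 2 = 1 / 2 := by
    rw [inv_pow, ← Complex.ofReal_pow, Real.sq_sqrt (by norm_num)]; norm_num
  have h3 : (Real.cos θ : ℂ) ^ 2 + (Real.sin θ : ℂ) ^ 2 = 1 := by
    rw [← Complex.ofReal_pow, ← Complex.ofReal_pow, ← Complex.ofReal_add]; simp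
  have e := chi_conj d k
  have e' := chi_conj d (-k)
  rw [neg_neg] at e'
  simp only [cdot, Mk, ← chi_one, ← chi_neg, Matrix.mulVec, dotProduct, Fin.sum_univ_four]
  generalize (ZMod.stdAddChar k : ℂ) = a at *
  generalize (ZMod.stdAddChar (-k) : ℂ) = b at *
  simp [e, e', div_eq_mul_inv, -Complex.ofReal_cos, -Complex.ofReal_sin]
  generalize ((Real.sqrt 2 : ℂ)⁻¹) = s at *
  generalize (Real.cos θ : ℂ) = c at *
  generalize (Real.sin θ : ℂ) = t at *
  generalize (starRingEnd ℂ) (u 0) = x0 at *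
  generalize (starRingEnd ℂ) (u 1) = x1 at *
  generalize (starRingEnd ℂ) (u 2) = x2 at *
  generalize (starRingEnd ℂ) (u 3) = x3 at *
  linear_combination (2 * s^2 * (x0 * u 0 + x1 * u 1) + (c^2+t^2) * (x2 * u 2 + x3 * u 3)) * h1
    + 2 * (x0 * u 0 + x1 * u 1) * h2 + (x2 * u 2 + x3 * u 3) * h3

lemma cdot_smul (a b : ℂ) (u w : Fin 4 → ℂ) :
    cdot (a • u) (b • w) = (starRingEnd ℂ) a * b * cdot u w := by
  simp only [cdot, Finset.mul_sum, Pi.smul_apply, smul_eq_mul, map_mul]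
  refine Finset.sum_congr rfl fun i _ => ?_
  ring

lemma complete (F : Fin 4 → Fin 4 → ℂ)
    (h : ∀ j l, cdot (F j) (F l) = if j = l then 1 else 0) (v : Fin 4 → ℂ) :
    v = ∑ j, cdot (F j) v • F j := by
  have h1 : (Matrix.of fun j i => (starRingEnd ℂ) (F j i)) * (Matrix.of fun i j => F j i)
      = (1 : Matrix (Fin 4) (Fin 4) ℂ) := by
    ext j l
    simp only [Matrix.mul_apply, Matrix.of_apply, Matrix.one_apply]
    exact h j l
  have h2 := mul_eq_one_comm.mp h1
  have h3 := congrArg (fun A => A.mulVec v) h2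
  simp only [Matrix.one_mulVec, ← Matrix.mulVec_mulVec] at h3
  conv_lhs => rw [← h3]
  funext i
  simp [Matrix.mulVec, dotProduct, cdot, Finset.sum_apply, mul_comm]

lemma avg_pow (z : ℂ) (hz : ‖z‖ = 1) :
    Tendsto (fun T : ℕ => (1 / (T : ℂ)) * ∑ t ∈ Finset.Icc 1 T, z ^ t) atTop
      (nhds (if z = 1 then 1 else 0)) := by
  split_ifs with h
  · subst h
    refine tendsto_const_nhds.congr' ?_
    filter_upwards [eventually_ge_atTop 1] with T hT
    have : (T : ℂ) ≠ 0 := by exact_mod_cast (by omega : T ≠ 0)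
    simp [this]
  · have hz1 : z - 1 ≠ 0 := sub_ne_zero.mpr h
    have hs : ∀ T : ℕ, ∑ t ∈ Finset.Icc 1 T, z ^ t = z * (z ^ T - 1) / (z - 1) := by
      intro T
      induction T with
      | zero => simp
      | succ T ih =>
        rw [Finset.sum_Icc_succ_top (by omega), ih]
        field_simp
        ring
    refine squeeze_zero_norm (a := fun T : ℕ => (2 / ‖z - 1‖) * (1 / (T : ℝ))) ?_ ?_
    · intro T
      rw [hs]
      have : ‖z ^ T - 1‖ ≤ 2 := by
        refine (norm_sub_le _ _).trans ?_
        simp [hz]; norm_num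
      simp only [norm_mul, norm_div, hz, one_mul, norm_one, Complex.norm_natCast]
      rw [mul_comm]
      gcongr
    · have := (tendsto_one_div_atTop_nhds_zero_nat (𝕜 := ℝ)).const_mul (2 / ‖z - 1‖)
      simpa using this

lemma init_fourier (d : ℕ) [NeZero d] (v : Fin 4 → ℂ) :
    initState d v = fun n i => ∑ k : ZMod d, ZMod.stdAddChar (k * n) * ((1 / (d : ℂ)) * v i) := by
  funext n i
  have hd : (d : ℂ) ≠ 0 := by exact_mod_cast NeZero.ne d
  rw [← Finset.sum_mul, AddChar.sum_mulShift n (ZMod.isPrimitive_stdAddChar d)]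
  simp only [initState, ZMod.card]
  split_ifs
  · field_simp
  · simp

lemma iter_fourier (d : ℕ) [NeZero d] (φ θ : ℝ) (hθ : θ = Real.pi / 4 * (1 + φ))
    (v : Fin 4 → ℂ)
    (Φ : ZMod d → Fin 4 → Fin 4 → ℂ) (lam : ZMod d → Fin 4 → ℂ)
    (horth : ∀ k j l, cdot (Φ k j) (Φ k l) = if j = l then 1 else 0)
    (heig : ∀ k j, (Mk d k θ).mulVec (Φ k j) = lam k j • Φ k j) (t : ℕ) :
    (Urc d φ)^[t] (initState d v) = fun n i => ∑ k : ZMod d, ZMod.stdAddChar (k * n) *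
      (∑ j, ((1 / (d : ℂ)) * cdot (Φ k j) v * lam k j ^ t) • Φ k j) i := by
  induction t with
  | zero =>
    simp only [Function.iterate_zero, id]
    rw [init_fourier]
    funext n i
    refine Finset.sum_congr rfl fun k _ => ?_
    conv_lhs => rw [complete (Φ k) (horth k) v]
    simp [Finset.sum_apply, Finset.mul_sum, mul_assoc]
  | succ t ih =>
    rw [Function.iterate_succ_apply', ih, Urc_fourier d φ θ hθ
      (fun k => ∑ j, ((1 / (d : ℂ)) * cdot (Φ k j) v * lam k j ^ t) • Φ k j)]
    funext n i
    refine Finset.sum_congr rfl fun k _ => ?_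
    congr 1
    refine congrFun ?_ i
    rw [Matrix.mulVec_sum]
    refine Finset.sum_congr rfl fun j _ => ?_
    rw [Matrix.mulVec_smul, heig, smul_smul, pow_succ, mul_assoc]

lemma lam_norm (d : ℕ) [NeZero d] (k : ZMod d) (θ : ℝ) (u : Fin 4 → ℂ) (l : ℂ)
    (hu : cdot u u = 1) (h : (Mk d k θ).mulVec u = l • u) :
    (starRingEnd ℂ) l * l = 1 := by
  have := Mk_iso d k θ u
  rw [h, cdot_smul, hu, mul_one] at this
  exact this

lemma prob_fourier (d : ℕ) [NeZero d] (φ θ : ℝ) (hθ : θ = Real.pi / 4 * (1 + φ))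
    (v : Fin 4 → ℂ)
    (Φ : ZMod d → Fin 4 → Fin 4 → ℂ) (lam : ZMod d → Fin 4 → ℂ)
    (horth : ∀ k j l, cdot (Φ k j) (Φ k l) = if j = l then 1 else 0)
    (heig : ∀ k j, (Mk d k θ).mulVec (Φ k j) = lam k j • Φ k j) (n : ZMod d) (t : ℕ) :
    (prob d φ (initState d v) n t : ℂ) =
      ∑ k : ZMod d, ∑ m : ZMod d, ∑ j : Fin 4, ∑ l : Fin 4,
        (1 / (d : ℂ) ^ 2 * (starRingEnd ℂ) (cdot (Φ k j) v) * cdot (Φ m l) v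
            * cdot (Φ k j) (Φ m l)
            * Complex.exp (2 * Real.pi * Complex.I * n.val
                * ((m.val : ℂ) - (k.val : ℂ)) / d)) *
          ((starRingEnd ℂ) (lam k j) * lam m l) ^ t := by
  have hchi : ∀ k m : ZMod d, Complex.exp (2 * Real.pi * Complex.I * n.val
                * ((m.val : ℂ) - (k.val : ℂ)) / d) =
      (starRingEnd ℂ) (ZMod.stdAddChar (k * n)) * ZMod.stdAddChar (m * n) := by
    intro k m
    rw [chi_conj, AddChar.map_neg_eq_inv, chi_eq, chi_eq, ← Complex.exp_neg, ← Complex.exp_add]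
    congr 1
    ring
  simp only [hchi]
  have h0 : (prob d φ (initState d v) n t : ℂ) = ∑ i : Fin 4,
      (starRingEnd ℂ) (((Urc d φ)^[t] (initState d v)) n i) *
        (((Urc d φ)^[t] (initState d v)) n i) := by
    simp [prob, Complex.conj_mul']
  rw [h0, iter_fourier d φ θ hθ v Φ lam horth heig t]
  simp only [map_sum, map_mul, Finset.sum_mul_sum]
  rw [Finset.sum_comm]
  refine Finset.sum_congr rfl fun k _ => ?_
  rw [Finset.sum_comm]
  refine Finset.sum_congr rfl fun m _ => ?_
  simp only [Finset.sum_apply, map_sum, Pi.smul_apply, smul_eq_mul, map_mul]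
  have : ∀ i : Fin 4, ∀ a b : ℂ, ∀ f g : Fin 4 → ℂ, a * (∑ j, f j) * (b * ∑ l, g l) =
    ∑ j, ∑ l, a * b * (f j * g l) := by
    intro i a b f g
    rw [mul_mul_mul_comm, Finset.sum_mul_sum, Finset.mul_sum]
    simp only [Finset.mul_sum]
  simp only [this 0]
  rw [Finset.sum_comm]
  refine Finset.sum_congr rfl fun j _ => ?_
  rw [Finset.sum_comm]
  refine Finset.sum_congr rfl fun l _ => ?_
  rw [show cdot (Φ k j) (Φ m l) = ∑ i : Fin 4, (starRingEnd ℂ) (Φ k j i) * Φ m l i from rfl]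
  simp only [Finset.mul_sum, Finset.sum_mul]
  refine Finset.sum_congr rfl fun i _ => ?_
  simp only [map_div₀, map_one, map_natCast, map_pow, mul_pow]
  ring

/-- the time-averaged distribution exists and equals the sum of
`f(n,k,m,j,l)` over all quadruples with `λ_j(k) = λ_l(m)`. -/
theorem statement14 (d : ℕ) [NeZero d] (hd : 1 ≤ d) (φ θ : ℝ)
    (hθ : θ = Real.pi / 4 * (1 + φ))
    (v : Fin 4 → ℂ) (hv : ∑ i : Fin 4, ‖v i‖ ^ 2 = 1)
    (Φ : ZMod d → Fin 4 → Fin 4 → ℂ) (lam : ZMod d → Fin 4 → ℂ)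
    (horth : ∀ k j l, cdot (Φ k j) (Φ k l) = if j = l then 1 else 0)
    (heig : ∀ k j, (Mk d k θ).mulVec (Φ k j) = lam k j • Φ k j)
    (n : ZMod d) :
    Tendsto (fun T : ℕ => (1 / (T : ℂ)) * ∑ t ∈ Finset.Icc 1 T,
        (prob d φ (initState d v) n t : ℂ)) atTop
      (nhds (∑ k : ZMod d, ∑ m : ZMod d, ∑ j : Fin 4, ∑ l : Fin 4,
        if lam k j = lam m l then
          1 / (d : ℂ) ^ 2 * (starRingEnd ℂ) (cdot (Φ k j) v) * cdot (Φ m l) v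
            * cdot (Φ k j) (Φ m l)
            * Complex.exp (2 * Real.pi * Complex.I * n.val
                * ((m.val : ℂ) - (k.val : ℂ)) / d)
        else 0)) := by
  have hlam : ∀ k j, (starRingEnd ℂ) (lam k j) * lam k j = 1 := fun k j =>
    lam_norm d k θ (Φ k j) (lam k j) (by simp [horth]) (heig k j)
  have hnorm : ∀ k j, ‖lam k j‖ = 1 := by
    intro k j
    have h := hlam k j
    rw [Complex.conj_mul'] at h
    have h' : ‖lam k j‖ ^ 2 = 1 := by exact_mod_cast h
    exact (pow_eq_one_iff_of_nonneg (norm_nonneg _) two_ne_zero).mp h'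
  have hiff : ∀ k j m l, (starRingEnd ℂ) (lam k j) * lam m l = 1 ↔ lam k j = lam m l := by
    intro k j m l
    constructor
    · intro h
      have hc : (starRingEnd ℂ) (lam k j) ≠ 0 := left_ne_zero_of_mul_eq_one h
      exact mul_left_cancel₀ hc ((hlam k j).trans h.symm)
    · intro h
      rw [← h]; exact hlam k j
  simp only [prob_fourier d φ θ hθ v Φ lam horth heig n]
  have hswap : ∀ T : ℕ, ∀ A : ZMod d → ZMod d → Fin 4 → Fin 4 → ℂ,
      ∀ z : ZMod d → ZMod d → Fin 4 → Fin 4 → ℂ,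
      (1 / (T : ℂ)) * ∑ t ∈ Finset.Icc 1 T, ∑ k, ∑ m, ∑ j, ∑ l, A k m j l * z k m j l ^ t =
      ∑ k, ∑ m, ∑ j, ∑ l, A k m j l * ((1 / (T : ℂ)) * ∑ t ∈ Finset.Icc 1 T, z k m j l ^ t) := by
    intro T A z
    rw [Finset.sum_comm, Finset.mul_sum]
    refine Finset.sum_congr rfl fun k _ => ?_
    rw [Finset.sum_comm, Finset.mul_sum]
    refine Finset.sum_congr rfl fun m _ => ?_
    rw [Finset.sum_comm, Finset.mul_sum]
    refine Finset.sum_congr rfl fun j _ => ?_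
    rw [Finset.sum_comm, Finset.mul_sum]
    refine Finset.sum_congr rfl fun l _ => ?_
    rw [← Finset.mul_sum]
    ring
  simp only [hswap _ (fun k m j l => 1 / (d : ℂ) ^ 2 * (starRingEnd ℂ) (cdot (Φ k j) v) *
    cdot (Φ m l) v * cdot (Φ k j) (Φ m l) * Complex.exp (2 * Real.pi * Complex.I * n.val
                * ((m.val : ℂ) - (k.val : ℂ)) / d))
    (fun k m j l => (starRingEnd ℂ) (lam k j) * lam m l)]
  refine tendsto_finsetSum _ fun k _ => tendsto_finsetSum _ fun m _ =>
    tendsto_finsetSum _ fun j _ => tendsto_finsetSum _ fun l _ => ?_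
  have hz := avg_pow ((starRingEnd ℂ) (lam k j) * lam m l) (by
    rw [norm_mul, RCLike.norm_conj, hnorm, hnorm, one_mul])
  have := hz.const_mul (1 / (d : ℂ) ^ 2 * (starRingEnd ℂ) (cdot (Φ k j) v) *
    cdot (Φ m l) v * cdot (Φ k j) (Φ m l) * Complex.exp (2 * Real.pi * Complex.I * n.val
                * ((m.val : ℂ) - (k.val : ℂ)) / d))
  simp only [hiff, mul_ite, mul_one, mul_zero] at this
  exact this
end
end
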